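/- Let n ≥ 3 be an integer, let τ be a complex number with Im(τ) > 0, set q = e^{πiτ} and τ' = -1/τ. Then q^{(n-1)(n+1)/12} · ((q; q²)_∞)² / ((q^n; q^{2n})_∞)^{2n} = (1/n) · (θ₁'(0 | τ'/n) / θ₁'(0 | τ')) · (θ₁(π/2 | τ') / θ₁(π/2 | τ'/n)) · ((θ₁(π/n | τ'/n))² ∏_{j=2}^{n-2} θ₁(jπ/n | τ'/n)) / (θ₁(π/2 | τ'/n))^{n-1}, where q^{(n-1)(n+1)/12} denotes e^{πiτ(n-1)(n+1)/12} and θ₁' denotes the derivative of θ₁(z | τ) with respect to z. -/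

import Mathlib

open Complex

/-- Infinite q-Pochhammer symbol `(a; q)_∞ = ∏_{i=0}^∞ (1 - a qⁱ)`. -/
noncomputable def qPoch (a q : ℂ) : ℂ := ∏' i : ℕ, (1 - a * q ^ i)

/-- Jacobi's first theta function
`θ₁(z | τ) = 2 ∑_{n=0}^∞ (-1)ⁿ e^{πiτ(2n+1)²/4} sin((2n+1)z)`. -/
noncomputable def theta1 (z τ : ℂ) : ℂ :=
  2 * ∑' n : ℕ, (-1 : ℂ) ^ n * Complex.exp (Real.pi * Complex.I * τ * (2 * n + 1) ^ 2 / 4) *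
    Complex.sin ((2 * n + 1) * z)

/-- The derivative of `θ₁(z | τ)` with respect to `z`. -/
noncomputable def theta1' (z τ : ℂ) : ℂ := deriv (fun w => theta1 w τ) z

/-!
Both sides equal `𝔣₁(τ)² / 𝔣₁(nτ)²ⁿ`, where `𝔣₁(τ) = η(τ/2) / η(τ)` is Weber's function. On the left
this is the product expansion of `𝔣₁`. On the right, the Jacobi triple product (a limit of the
`q`-binomial theorem) and the factorization of `1 - xⁿ` over the `n`-th roots of unity turn every
theta value into an eta quotient:
`θ₁'(0 | τ) = 2η(τ)³`, `θ₁(π/2 | τ) = 2η(2τ)² / η(τ)` and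
`∏_{j=1}^{n-1} θ₁(jπ/n | τ) = n η(τ)ⁿ⁻³ η(nτ)²`.
The outcome is `𝔣₂(τ')² / 𝔣₂(τ'/n)²ⁿ` with `𝔣₂(τ) = √2 η(2τ) / η(τ)`, and the transformation law
`η(-1/τ)² = -iτ η(τ)²` exchanges `𝔣₁` and `𝔣₂`.
-/

open Filter Finset ModularForm
open scoped Real Topology

section QBinomial

/-- The finite `q`-Pochhammer symbol `(a; p)_N = ∏_{i=0}^{N-1} (1 - a pⁱ)`, whose limit for `N → ∞`
is `qPoch a p`. -/
def finiteQPoch {R : Type*} [CommRing R] (a p : R) (N : ℕ) : R :=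
  ∏ i ∈ range N, (1 - a * p ^ i)

/-- The Gaussian binomial coefficient `[N, j]_p`, defined by the `q`-Pascal recurrence so that no
division is needed. -/
def gaussBinom {R : Type*} [CommSemiring R] (p : R) : ℕ → ℕ → R
  | _, 0 => 1
  | 0, _ + 1 => 0
  | N + 1, j + 1 => gaussBinom p N j + p ^ (j + 1) * gaussBinom p N (j + 1)

lemma gaussBinom_zero_right {R : Type*} [CommSemiring R] (p : R) (N : ℕ) :
    gaussBinom p N 0 = 1 := by
  cases N <;> rfl

lemma gaussBinom_succ_succ {R : Type*} [CommSemiring R] (p : R) (N j : ℕ) :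
    gaussBinom p (N + 1) (j + 1) = gaussBinom p N j + p ^ (j + 1) * gaussBinom p N (j + 1) := rfl

lemma gaussBinom_eq_zero_of_lt {R : Type*} [CommSemiring R] (p : R) {N j : ℕ} (h : N < j) :
    gaussBinom p N j = 0 := by
  induction N generalizing j with
  | zero => obtain ⟨j, rfl⟩ := Nat.exists_eq_succ_of_ne_zero h.ne'; rfl
  | succ N ih =>
    obtain ⟨j, rfl⟩ := Nat.exists_eq_succ_of_ne_zero (Nat.ne_zero_of_lt h)
    simp [gaussBinom_succ_succ, ih (show N < j by lia), ih (show N < j + 1 by lia)]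

variable {R : Type*} [CommRing R]

lemma finiteQPoch_zero (a p : R) : finiteQPoch a p 0 = 1 := prod_range_zero _

lemma finiteQPoch_succ (a p : R) (N : ℕ) :
    finiteQPoch a p (N + 1) = finiteQPoch a p N * (1 - a * p ^ N) :=
  prod_range_succ _ _

lemma finiteQPoch_add (a p : R) (M N : ℕ) :
    finiteQPoch a p (M + N) = finiteQPoch a p M * finiteQPoch (a * p ^ M) p N := by
  simp only [finiteQPoch, prod_range_add, pow_add, mul_assoc]

lemma finiteQPoch_succ' (a p : R) (N : ℕ) :
    finiteQPoch a p (N + 1) = (1 - a) * finiteQPoch (a * p) p N := by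
  rw [add_comm N 1, finiteQPoch_add, finiteQPoch_succ, finiteQPoch_zero]
  simp

lemma gaussBinom_mul_finiteQPoch_mul_finiteQPoch (p : R) (j k : ℕ) :
    gaussBinom p (j + k) j * finiteQPoch p p j * finiteQPoch p p k = finiteQPoch p p (j + k) := by
  induction hN : j + k generalizing j k with
  | zero =>
    obtain ⟨rfl, rfl⟩ : j = 0 ∧ k = 0 := by lia
    simp [gaussBinom_zero_right, finiteQPoch_zero]
  | succ N ih =>
    rcases j with _ | j
    · obtain rfl : k = N + 1 := by lia
      simp [gaussBinom_zero_right, finiteQPoch_zero]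
    rcases k with _ | k
    · obtain rfl : j = N := by lia
      rw [gaussBinom_succ_succ, gaussBinom_eq_zero_of_lt p j.lt_succ_self, finiteQPoch_succ]
      linear_combination (1 - p * p ^ j) * ih j 0 rfl
    · have hj := ih j (k + 1) (by lia)
      have hk := ih (j + 1) k (by lia)
      obtain rfl : N = j + k + 1 := by lia
      rw [finiteQPoch_succ p p k] at hj
      rw [finiteQPoch_succ p p j] at hk
      rw [gaussBinom_succ_succ, finiteQPoch_succ p p (j + k + 1), finiteQPoch_succ p p j,
        finiteQPoch_succ p p k]
      linear_combination (1 - p * p ^ j) * hj + p ^ (j + 1) * (1 - p * p ^ k) * hk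

theorem finiteQPoch_neg_eq_sum_gaussBinom (y p : R) (N : ℕ) :
    finiteQPoch (-y) p N = ∑ j ∈ range (N + 1), p ^ j.choose 2 * gaussBinom p N j * y ^ j := by
  induction N generalizing y with
  | zero => simp [finiteQPoch_zero, gaussBinom_zero_right]
  | succ N ih =>
    have shift : ∑ j ∈ range (N + 1), p ^ j.choose 2 * gaussBinom p N j * (y * p) ^ j =
        ∑ j ∈ range (N + 1),
          p ^ (j + 1).choose 2 * gaussBinom p N (j + 1) * (y * p) ^ (j + 1) + 1 := by
      rw [sum_range_succ', sum_range_succ _ N, gaussBinom_eq_zero_of_lt p N.lt_succ_self]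
      simp [gaussBinom_zero_right]
    have mul_y : y * ∑ j ∈ range (N + 1), p ^ j.choose 2 * gaussBinom p N j * (y * p) ^ j =
        ∑ j ∈ range (N + 1), p ^ (j + 1).choose 2 * gaussBinom p N j * y ^ (j + 1) := by
      rw [mul_sum]
      refine sum_congr rfl fun j _ ↦ ?_
      rw [Nat.choose_succ_succ' j 1, Nat.choose_one_right]
      ring
    calc finiteQPoch (-y) p (N + 1)
      _ = (1 + y) * ∑ j ∈ range (N + 1), p ^ j.choose 2 * gaussBinom p N j * (y * p) ^ j := by
        rw [finiteQPoch_succ', neg_mul, ih, sub_neg_eq_add]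
      _ = ∑ j ∈ range (N + 1), p ^ (j + 1).choose 2 * gaussBinom p (N + 1) (j + 1) * y ^ (j + 1)
          + 1 := by
        rw [add_mul, one_mul, mul_y, shift, add_right_comm, ← sum_add_distrib]
        congr 1
        refine sum_congr rfl fun j _ ↦ ?_
        rw [gaussBinom_succ_succ]
        ring
      _ = _ := by simp [sum_range_succ' _ (N + 1), gaussBinom_zero_right]

end QBinomial

section TripleProduct

variable {K : Type*} [Field K]

lemma finiteQPoch_reflect {q w : K} (hq : q ≠ 0) (hw : w ≠ 0) (M : ℕ) :
    finiteQPoch (-(q ^ (1 - 2 * M : ℤ) * w)) (q ^ 2) M =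
      q ^ (-(M : ℤ) ^ 2) * w ^ M * finiteQPoch (-(q * w⁻¹)) (q ^ 2) M := by
  induction M with
  | zero => simp [finiteQPoch_zero]
  | succ M ih =>
    have hpow : q ^ (1 - 2 * (M + 1 : ℕ) : ℤ) * q ^ 2 = q ^ (1 - 2 * M : ℤ) := by
      rw [← zpow_natCast q 2, ← zpow_add₀ hq]
      congr 1
      push_cast
      ring
    have hsq : q ^ (-((M + 1 : ℕ) : ℤ) ^ 2) =
        q ^ (-(M : ℤ) ^ 2) * q ^ (1 - 2 * (M + 1 : ℕ) : ℤ) := by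
      rw [← zpow_add₀ hq]
      congr 1
      push_cast
      ring
    have hinv : q ^ (1 - 2 * (M + 1 : ℕ) : ℤ) * (q * (q ^ 2) ^ M) = 1 := by
      rw [← pow_mul, ← pow_succ', ← zpow_natCast, ← zpow_add₀ hq, ← zpow_zero q]
      congr 1
      push_cast
      ring
    rw [finiteQPoch_succ', neg_mul, mul_right_comm, hpow, ih, finiteQPoch_succ, hsq]
    generalize q ^ (1 - 2 * (M + 1 : ℕ) : ℤ) = x at hinv ⊢
    linear_combination q ^ (-(M : ℤ) ^ 2) * w ^ M * finiteQPoch (-(q * w⁻¹)) (q ^ 2) M *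
      (-(w * w⁻¹) * hinv - mul_inv_cancel₀ hw)

lemma zpow_sq_mul_zpow_eq {q w : K} (hq : q ≠ 0) (hw : w ≠ 0) (M j : ℕ) :
    (q ^ 2) ^ j.choose 2 * (q ^ (1 - 2 * M : ℤ) * w) ^ j =
      q ^ (-(M : ℤ) ^ 2) * w ^ M * (q ^ ((j - M : ℤ) ^ 2) * w ^ (j - M : ℤ)) := by
  have hchoose : 2 * (j.choose 2 : ℤ) = j ^ 2 - j := by
    induction j with
    | zero => simp
    | succ j ih =>
      rw [Nat.choose_succ_succ' j 1, Nat.choose_one_right]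
      push_cast
      linear_combination ih
  have hexp : (2 * j.choose 2 : ℤ) + (1 - 2 * M) * j = -(M : ℤ) ^ 2 + (j - M) ^ 2 := by
    linear_combination hchoose
  calc (q ^ 2) ^ j.choose 2 * (q ^ (1 - 2 * M : ℤ) * w) ^ j
    _ = q ^ (2 * j.choose 2 + (1 - 2 * M) * j : ℤ) * w ^ j := by
      rw [zpow_add₀ hq, zpow_mul q (1 - 2 * M : ℤ), zpow_mul q 2]
      simp only [zpow_natCast, zpow_ofNat]
      ring
    _ = q ^ (-(M : ℤ) ^ 2) * w ^ M * (q ^ ((j - M : ℤ) ^ 2) * w ^ (j - M : ℤ)) := by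
      rw [hexp, zpow_add₀ hq, zpow_sub₀ hw, zpow_natCast, zpow_natCast]
      field_simp

theorem finiteQPoch_mul_finiteQPoch_eq_sum {q w : K} (hq : q ≠ 0) (hw : w ≠ 0) (M : ℕ) :
    finiteQPoch (-(q * w)) (q ^ 2) M * finiteQPoch (-(q * w⁻¹)) (q ^ 2) M =
      ∑ m ∈ Icc (-M : ℤ) M, q ^ (m ^ 2) * w ^ m * gaussBinom (q ^ 2) (2 * M) (M + m).toNat := by
  have hpow : q ^ (1 - 2 * M : ℤ) * (q ^ 2) ^ M = q := by
    rw [← pow_mul, ← zpow_natCast, ← zpow_add₀ hq]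
    simp
  -- The `q`-binomial theorem will be applied at `y = q^{1-2M} w`: reflection turns the first `M`
  -- of the `2M` factors into those of `w⁻¹`.
  have hprod : finiteQPoch (-(q ^ (1 - 2 * M : ℤ) * w)) (q ^ 2) (2 * M) =
      q ^ (-(M : ℤ) ^ 2) * w ^ M *
        (finiteQPoch (-(q * w)) (q ^ 2) M * finiteQPoch (-(q * w⁻¹)) (q ^ 2) M) := by
    rw [two_mul M, finiteQPoch_add, neg_mul, mul_right_comm, hpow, finiteQPoch_reflect hq hw]
    ring
  refine mul_left_cancel₀ (mul_ne_zero (zpow_ne_zero _ hq) (pow_ne_zero M hw))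
    (hprod.symm.trans ?_)
  rw [finiteQPoch_neg_eq_sum_gaussBinom, mul_sum]
  refine sum_nbij' (fun j ↦ (j - M : ℤ)) (fun m ↦ (M + m).toNat)
    (by simp only [mem_range, mem_Icc]; lia) (by simp only [mem_range, mem_Icc]; lia)
    (by simp) (by simp only [mem_Icc]; lia) fun j _ ↦ ?_
  rw [mul_right_comm, zpow_sq_mul_zpow_eq hq hw, add_sub_cancel, Int.toNat_natCast]
  ring

lemma one_sub_mul_pow_ne_zero {𝕜 : Type*} [NormedField 𝕜] {a p : 𝕜} (ha : ‖a‖ < 1)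
    (hp : ‖p‖ ≤ 1) (i : ℕ) :
    1 - a * p ^ i ≠ 0 := by
  refine sub_ne_zero.mpr fun h ↦ ?_
  have : ‖a * p ^ i‖ < 1 := by
    rw [norm_mul, norm_pow]
    exact mul_lt_one_of_nonneg_of_lt_one_left (norm_nonneg _) ha (pow_le_one₀ (norm_nonneg _) hp)
  simp [← h] at this

lemma finiteQPoch_ne_zero {𝕜 : Type*} [NormedField 𝕜] {a p : 𝕜} (ha : ‖a‖ < 1) (hp : ‖p‖ ≤ 1)
    (N : ℕ) :
    finiteQPoch a p N ≠ 0 :=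
  prod_ne_zero_iff.mpr fun i _ ↦ one_sub_mul_pow_ne_zero ha hp i

variable {p : ℂ}

lemma summable_norm_neg_mul_pow (a : ℂ) (hp : ‖p‖ < 1) : Summable fun i : ℕ ↦ ‖-(a * p ^ i)‖ := by
  simpa using (summable_geometric_of_lt_one (norm_nonneg p) hp).mul_left ‖a‖

lemma multipliable_one_sub_mul_pow (a : ℂ) (hp : ‖p‖ < 1) :
    Multipliable fun i : ℕ ↦ 1 - a * p ^ i := by
  simpa only [sub_eq_add_neg] using
    multipliable_one_add_of_summable (summable_norm_neg_mul_pow a hp)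

lemma tendsto_finiteQPoch (a : ℂ) (hp : ‖p‖ < 1) :
    Tendsto (finiteQPoch a p) atTop (𝓝 (qPoch a p)) :=
  (multipliable_one_sub_mul_pow a hp).hasProd.tendsto_prod_nat

lemma qPoch_ne_zero {a : ℂ} (ha : ‖a‖ < 1) (hp : ‖p‖ < 1) : qPoch a p ≠ 0 := by
  simpa only [qPoch, sub_eq_add_neg] using tprod_one_add_ne_zero_of_summable
    (fun i ↦ by simpa only [sub_eq_add_neg] using one_sub_mul_pow_ne_zero ha hp.le i)
    (summable_norm_neg_mul_pow a hp)

lemma gaussBinom_add_left_eq_div (hp : ‖p‖ < 1) (j k : ℕ) :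
    gaussBinom p (j + k) j =
      finiteQPoch p p (j + k) / (finiteQPoch p p j * finiteQPoch p p k) := by
  rw [eq_div_iff (mul_ne_zero (finiteQPoch_ne_zero hp hp.le j) (finiteQPoch_ne_zero hp hp.le k)),
    ← mul_assoc, gaussBinom_mul_finiteQPoch_mul_finiteQPoch]

lemma tendsto_gaussBinom_add (hp : ‖p‖ < 1) {ι : Type*} {l : Filter ι} {j k : ι → ℕ}
    (hj : Tendsto j l atTop) (hk : Tendsto k l atTop) :
    Tendsto (fun i ↦ gaussBinom p (j i + k i) (j i)) l (𝓝 (qPoch p p)⁻¹) := by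
  have h0 := qPoch_ne_zero hp hp
  have ht := tendsto_finiteQPoch p hp
  have h := (ht.comp (hj.atTop_add_atTop hk)).div ((ht.comp hj).mul (ht.comp hk))
    (mul_ne_zero h0 h0)
  rw [div_mul_cancel_left₀ h0] at h
  exact h.congr fun i ↦ (gaussBinom_add_left_eq_div hp _ _).symm

lemma tendsto_gaussBinom_two_mul (hp : ‖p‖ < 1) (m : ℤ) :
    Tendsto (fun M : ℕ ↦ gaussBinom p (2 * M) (M + m).toNat) atTop (𝓝 (qPoch p p)⁻¹) := by
  have hadd : Tendsto (fun M : ℕ ↦ (M + m).toNat) atTop atTop :=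
    tendsto_atTop_mono (fun M ↦ by lia) (tendsto_sub_atTop_nat m.natAbs)
  have hsub : Tendsto (fun M : ℕ ↦ (M - m).toNat) atTop atTop :=
    tendsto_atTop_mono (fun M ↦ by lia) (tendsto_sub_atTop_nat m.natAbs)
  refine (tendsto_gaussBinom_add hp hadd hsub).congr' ?_
  filter_upwards [eventually_ge_atTop m.natAbs] with M hM
  rw [show (M + m).toNat + (M - m).toNat = 2 * M by lia]

lemma exists_norm_gaussBinom_le (hp : ‖p‖ < 1) :
    ∃ C, ∀ N j, ‖gaussBinom p N j‖ ≤ C := by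
  have ht := tendsto_finiteQPoch p hp
  obtain ⟨B, hB⟩ := ht.norm.bddAbove_range
  obtain ⟨B', hB'⟩ := (ht.inv₀ (qPoch_ne_zero hp hp)).norm.bddAbove_range
  replace hB (i : ℕ) : ‖finiteQPoch p p i‖ ≤ B := hB ⟨i, rfl⟩
  replace hB' (i : ℕ) : ‖(finiteQPoch p p i)⁻¹‖ ≤ B' := hB' ⟨i, rfl⟩
  have h0 : 0 ≤ B := (norm_nonneg _).trans (hB 0)
  have h0' : 0 ≤ B' := (norm_nonneg _).trans (hB' 0)
  refine ⟨B * (B' * B'), fun N j ↦ ?_⟩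
  rcases le_or_gt j N with h | h
  · obtain ⟨k, rfl⟩ := Nat.exists_eq_add_of_le h
    rw [gaussBinom_add_left_eq_div hp, div_eq_mul_inv, mul_inv, norm_mul, norm_mul]
    gcongr
    exacts [hB _, hB' _, hB' _]
  · rw [gaussBinom_eq_zero_of_lt p h, norm_zero]
    positivity

/-- The nome `q = e^{πiτ}` of the lattice parameter `τ`. -/
noncomputable def nome (τ : ℂ) : ℂ := cexp (π * I * τ)

lemma nome_ne_zero (τ : ℂ) : nome τ ≠ 0 := exp_ne_zero _

lemma nome_nat_mul (n : ℕ) (τ : ℂ) : nome (n * τ) = nome τ ^ n := by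
  rw [nome, nome, ← exp_nat_mul, mul_left_comm]

lemma norm_nome_lt_one {τ : ℂ} (hτ : 0 < τ.im) : ‖nome τ‖ < 1 := by
  simpa [nome, norm_exp] using mul_pos Real.pi_pos hτ

lemma norm_nome_sq_lt_one {τ : ℂ} (hτ : 0 < τ.im) : ‖nome τ ^ 2‖ < 1 := by
  simpa using pow_lt_one₀ (norm_nonneg _) (norm_nome_lt_one hτ) two_ne_zero

lemma jacobiTheta₂_term_eq_nome_zpow (m : ℤ) (z τ : ℂ) :
    jacobiTheta₂_term m z τ = nome τ ^ (m ^ 2) * cexp (2 * π * I * z) ^ m := by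
  rw [jacobiTheta₂_term, nome, ← exp_int_mul, ← exp_int_mul, ← exp_add]
  congr 1
  push_cast
  ring

theorem jacobiTheta₂_eq_qPoch_mul_qPoch_mul_qPoch (z : ℂ) {τ : ℂ} (hτ : 0 < τ.im) :
    jacobiTheta₂ z τ = qPoch (nome τ ^ 2) (nome τ ^ 2) *
      (qPoch (-(nome τ * cexp (2 * π * I * z))) (nome τ ^ 2) *
        qPoch (-(nome τ * (cexp (2 * π * I * z))⁻¹)) (nome τ ^ 2)) := by
  have hp := norm_nome_sq_lt_one hτ
  let term (M : ℕ) (m : ℤ) : ℂ :=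
    jacobiTheta₂_term m z τ * gaussBinom (nome τ ^ 2) (2 * M) (M + m).toNat
  have hfinite (M : ℕ) : finiteQPoch (-(nome τ * cexp (2 * π * I * z))) (nome τ ^ 2) M *
      finiteQPoch (-(nome τ * (cexp (2 * π * I * z))⁻¹)) (nome τ ^ 2) M =
      ∑' m, (Set.Icc (-M : ℤ) M).indicator (term M) m := by
    rw [finiteQPoch_mul_finiteQPoch_eq_sum (nome_ne_zero τ) (exp_ne_zero _),
      ← coe_Icc, ← sum_eq_tsum_indicator]
    simp only [term, jacobiTheta₂_term_eq_nome_zpow]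
  have hlim (m : ℤ) : Tendsto (fun M : ℕ ↦ (Set.Icc (-M : ℤ) M).indicator (term M) m) atTop
      (𝓝 (jacobiTheta₂_term m z τ * (qPoch (nome τ ^ 2) (nome τ ^ 2))⁻¹)) := by
    refine ((tendsto_gaussBinom_two_mul hp m).const_mul _).congr' ?_
    filter_upwards [eventually_ge_atTop m.natAbs] with M hM
    rw [Set.indicator_of_mem (by simp only [Set.mem_Icc]; lia)]
  obtain ⟨C, hC⟩ := exists_norm_gaussBinom_le hp
  have hbound (M : ℕ) (m : ℤ) :
      ‖(Set.Icc (-M : ℤ) M).indicator (term M) m‖ ≤ ‖jacobiTheta₂_term m z τ‖ * C := by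
    refine (norm_indicator_le_norm_self _ _).trans ?_
    rw [norm_mul]
    gcongr
    exact hC _ _
  have hsum := ((summable_jacobiTheta₂_term_iff z τ).mpr hτ).norm.mul_right C
  have hprod := (tendsto_finiteQPoch (-(nome τ * cexp (2 * π * I * z))) hp).mul
    (tendsto_finiteQPoch (-(nome τ * (cexp (2 * π * I * z))⁻¹)) hp)
  rw [tendsto_nhds_unique hprod ((tendsto_tsum_of_dominated_convergence hsum hlim
    (Eventually.of_forall hbound)).congr fun M ↦ (hfinite M).symm), tsum_mul_right, ← jacobiTheta₂]
  exact (mul_div_cancel₀ _ (qPoch_ne_zero hp hp)).symm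

end TripleProduct

section ThetaProduct

lemma qPoch_eq_one_sub_mul (a : ℂ) {p : ℂ} (hp : ‖p‖ < 1) :
    qPoch a p = (1 - a) * qPoch (p * a) p := by
  have hshift : (fun i : ℕ ↦ 1 - a * p ^ (i + 1)) = fun i ↦ 1 - p * a * p ^ i := by
    ext i
    ring
  rw [qPoch, qPoch, tprod_eq_zero_mul' (hshift ▸ multipliable_one_sub_mul_pow _ hp), hshift,
    pow_zero, mul_one]

lemma continuous_qPoch {p : ℂ} (hp : ‖p‖ < 1) : Continuous fun a ↦ qPoch a p := by
  refine continuous_iff_continuousAt.mpr fun a ↦ ?_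
  simp only [ContinuousAt, qPoch, sub_eq_add_neg]
  refine tendsto_tprod_one_add_of_dominated_convergence (bound := fun i ↦ (‖a‖ + 1) * ‖p‖ ^ i)
    ((summable_geometric_of_lt_one (norm_nonneg p) hp).mul_left _) (fun i ↦ ?_) ?_
  · exact (by fun_prop : Continuous fun x : ℂ ↦ -(x * p ^ i)).tendsto a
  · filter_upwards [(continuous_norm.tendsto a).eventually_lt_const (lt_add_one ‖a‖)] with x hx i
    rw [norm_neg, norm_mul, norm_pow]
    gcongr

lemma eta_eq_exp_mul_qPoch (τ : ℂ) :
    η τ = cexp (π * I * τ / 12) * qPoch (nome τ ^ 2) (nome τ ^ 2) := by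
  have hnome : cexp (2 * π * I * τ) = nome τ ^ 2 := by
    rw [nome, ← exp_nat_mul]
    push_cast
    ring_nf
  rw [ModularForm.eta, qPoch]
  congr 1
  · rw [Function.Periodic.qParam]
    push_cast
    ring_nf
  · exact tprod_congr fun i ↦ by rw [eta_q_eq_pow, hnome, pow_succ']

/-- The quotient `θ₁(z | τ) / (2 sin z · η(τ))` as an infinite product. The exponential factor makes
its value at `z = 0` equal to `η(τ)²`. -/
noncomputable def thetaProd (z τ : ℂ) : ℂ :=
  cexp (π * I * τ / 6) * (qPoch (nome τ ^ 2 * cexp (2 * I * z)) (nome τ ^ 2) *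
    qPoch (nome τ ^ 2 * (cexp (2 * I * z))⁻¹) (nome τ ^ 2))

lemma exp_mul_jacobiTheta₂_term (z τ : ℂ) (k : ℤ) :
    cexp (π * I * τ / 4 + I * z) * jacobiTheta₂_term k (z / π + τ / 2 + 1 / 2) τ =
      (-1) ^ k * cexp (π * I * τ * (2 * k + 1) ^ 2 / 4) * cexp ((2 * k + 1) * z * I) := by
  have hπ : (π : ℂ) ≠ 0 := ofReal_ne_zero.mpr Real.pi_ne_zero
  rw [← exp_pi_mul_I, ← exp_int_mul, jacobiTheta₂_term, ← exp_add, ← exp_add, ← exp_add]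
  congr 1
  field_simp
  ring

/-- The terms of index `n` and `-(n + 1)` of the bilateral series combine into the `n`-th sine. -/
lemma theta1_eq_jacobiTheta₂ (z : ℂ) {τ : ℂ} (hτ : 0 < τ.im) :
    theta1 z τ =
      -I * cexp (π * I * τ / 4 + I * z) * jacobiTheta₂ (z / π + τ / 2 + 1 / 2) τ := by
  have hs := (summable_jacobiTheta₂_term_iff (z / π + τ / 2 + 1 / 2) τ).mpr hτ
  have hnonneg : Summable fun n : ℕ ↦ jacobiTheta₂_term n (z / π + τ / 2 + 1 / 2) τ :=
    hs.comp_injective (i := fun n : ℕ ↦ (n : ℤ)) Nat.cast_injective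
  have hneg : Summable fun n : ℕ ↦
      jacobiTheta₂_term (-((n : ℤ) + 1)) (z / π + τ / 2 + 1 / 2) τ :=
    hs.comp_injective (i := fun n : ℕ ↦ -((n : ℤ) + 1)) fun a b h ↦ by simp only at h; lia
  rw [theta1, jacobiTheta₂,
    tsum_of_nat_of_neg_add_one (f := fun k ↦ jacobiTheta₂_term k (z / π + τ / 2 + 1 / 2) τ)
      hnonneg hneg, ← hnonneg.tsum_add hneg, ← tsum_mul_left, ← tsum_mul_left]
  refine tsum_congr fun n ↦ ?_
  have hsign : (-1 : ℂ) ^ (-((n : ℤ) + 1)) = -(-1) ^ n := by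
    rw [zpow_neg, zpow_add_one₀ (by norm_num), zpow_natCast]
    rcases neg_one_pow_eq_or ℂ n with h | h <;> simp [h]
  have hindex : 2 * ((-((n : ℤ) + 1) : ℤ) : ℂ) + 1 = -(2 * n + 1) := by
    push_cast
    ring
  rw [mul_add, mul_assoc (-I), mul_assoc (-I), exp_mul_jacobiTheta₂_term,
    exp_mul_jacobiTheta₂_term, hsign, hindex, zpow_natCast, Int.cast_natCast, Complex.sin, neg_sq]
  ring_nf

theorem theta1_eq_sin_mul_eta_mul_thetaProd (z : ℂ) {τ : ℂ} (hτ : 0 < τ.im) :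
    theta1 z τ = 2 * sin z * η τ * thetaProd z τ := by
  have hπ : (π : ℂ) ≠ 0 := ofReal_ne_zero.mpr Real.pi_ne_zero
  have hw : cexp (2 * π * I * (z / π + τ / 2 + 1 / 2)) = -(nome τ * cexp (2 * I * z)) := by
    rw [show 2 * π * I * (z / π + τ / 2 + 1 / 2) = π * I * τ + 2 * I * z + π * I by
      field_simp; ring, exp_add, exp_add, exp_pi_mul_I, nome]
    ring
  have hsin : 2 * sin z = -I * cexp (I * z) * (1 - (cexp (2 * I * z))⁻¹) := by
    rw [← exp_neg, mul_sub, mul_assoc (-I) _ (cexp _), ← exp_add, Complex.sin]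
    ring_nf
  have harg : -(nome τ * (-(nome τ * cexp (2 * I * z)))⁻¹) = (cexp (2 * I * z))⁻¹ := by
    rw [inv_neg, mul_neg, neg_neg, mul_inv, mul_inv_cancel_left₀ (nome_ne_zero τ)]
  have hexp : cexp (π * I * τ / 4) = cexp (π * I * τ / 12) * cexp (π * I * τ / 6) := by
    rw [← exp_add]
    ring_nf
  rw [theta1_eq_jacobiTheta₂ z hτ, jacobiTheta₂_eq_qPoch_mul_qPoch_mul_qPoch _ hτ, hw, harg,
    qPoch_eq_one_sub_mul (cexp (2 * I * z))⁻¹ (norm_nome_sq_lt_one hτ), exp_add, hexp, hsin,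
    eta_eq_exp_mul_qPoch, thetaProd, mul_neg, neg_neg, ← mul_assoc (nome τ), ← sq]
  ring

lemma theta1_pi_sub (z τ : ℂ) : theta1 (π - z) τ = theta1 z τ := by
  have hsin (n : ℕ) : sin ((2 * n + 1) * (π - z)) = sin ((2 * n + 1) * z) := by
    rw [show (2 * n + 1) * (π - z) = π - (2 * n + 1) * z + n * (2 * π) by ring,
      sin_add_nat_mul_two_pi, sin_pi_sub]
  simp only [theta1, hsin]

end ThetaProduct

section EtaQuotients

variable {τ : ℂ}

lemma continuous_thetaProd (hτ : 0 < τ.im) : Continuous fun z ↦ thetaProd z τ := by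
  have hc := continuous_qPoch (norm_nome_sq_lt_one hτ)
  exact continuous_const.mul ((hc.comp (by fun_prop)).mul
    (hc.comp (continuous_const.mul ((by fun_prop : Continuous fun z ↦ cexp (2 * I * z)).inv₀
      fun _ ↦ exp_ne_zero _))))

lemma hasDerivAt_mul_of_eq_zero {𝕜 : Type*} [NontriviallyNormedField 𝕜] {f g : 𝕜 → 𝕜} {f' a : 𝕜}
    (hf : HasDerivAt f f' a) (hfa : f a = 0) (hg : ContinuousAt g a) :
    HasDerivAt (fun x ↦ f x * g x) (f' * g a) a := by
  rw [hasDerivAt_iff_tendsto_slope] at hf ⊢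
  refine (hf.mul (hg.mono_left nhdsWithin_le_nhds)).congr fun x ↦ ?_
  simp only [slope_def_field, hfa]
  ring

lemma exp_pi_mul_I_mul_div_six (τ : ℂ) : cexp (π * I * τ / 6) = cexp (π * I * τ / 12) ^ 2 := by
  rw [← exp_nat_mul]
  push_cast
  ring_nf

lemma thetaProd_zero (τ : ℂ) : thetaProd 0 τ = η τ ^ 2 := by
  simp only [thetaProd, mul_zero, exp_zero, inv_one, mul_one, eta_eq_exp_mul_qPoch,
    exp_pi_mul_I_mul_div_six]
  ring

theorem theta1'_zero (hτ : 0 < τ.im) : theta1' 0 τ = 2 * η τ ^ 3 := by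
  have hsin : HasDerivAt (fun z ↦ 2 * sin z * η τ) (2 * cos 0 * η τ) 0 :=
    ((hasDerivAt_sin 0).const_mul 2).mul_const (η τ)
  have h := hasDerivAt_mul_of_eq_zero hsin (by simp) (continuous_thetaProd hτ).continuousAt
  simp only [← theta1_eq_sin_mul_eta_mul_thetaProd _ hτ] at h
  rw [theta1', h.deriv, thetaProd_zero, cos_zero]
  ring

lemma qPoch_neg_mul_qPoch {p : ℂ} (hp : ‖p‖ < 1) (a : ℂ) :
    qPoch (-a) p * qPoch a p = qPoch (a ^ 2) (p ^ 2) := by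
  unfold qPoch
  rw [← (multipliable_one_sub_mul_pow _ hp).tprod_mul (multipliable_one_sub_mul_pow _ hp)]
  exact tprod_congr fun i ↦ by ring

lemma thetaProd_pi_div_two_mul_eta_sq (hτ : 0 < τ.im) :
    thetaProd (π / 2) τ * η τ ^ 2 = η (2 * τ) ^ 2 := by
  have hexp : cexp (π * I * (2 * τ) / 12) = cexp (π * I * τ / 12) ^ 2 := by
    rw [← exp_pi_mul_I_mul_div_six]
    ring_nf
  have hnome : nome (2 * τ) = nome τ ^ 2 := mod_cast nome_nat_mul 2 τ
  have hw : cexp (2 * I * (π / 2)) = -1 := by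
    rw [← exp_pi_mul_I]
    ring_nf
  rw [thetaProd, hw, inv_neg_one, mul_neg_one, eta_eq_exp_mul_qPoch, eta_eq_exp_mul_qPoch, hexp,
    hnome, ← qPoch_neg_mul_qPoch (norm_nome_sq_lt_one hτ), exp_pi_mul_I_mul_div_six]
  ring

theorem theta1_pi_div_two (hτ : 0 < τ.im) : theta1 (π / 2) τ = 2 * η (2 * τ) ^ 2 / η τ := by
  have hη := eta_ne_zero hτ
  rw [theta1_eq_sin_mul_eta_mul_thetaProd _ hτ, sin_pi_div_two,
    ← thetaProd_pi_div_two_mul_eta_sq hτ]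
  field_simp

variable {n : ℕ}

lemma prod_one_sub_mul_pow {R : Type*} [CommRing R] [IsDomain R] {ζ : R} (hn : 0 < n)
    (hζ : IsPrimitiveRoot ζ n) (a : R) : ∏ j ∈ range n, (1 - a * ζ ^ j) = 1 - a ^ n := by
  simpa [Polynomial.eval_prod, mul_comm] using
    (congrArg (Polynomial.eval 1) (X_pow_sub_C_eq_prod hζ hn (α := a) rfl)).symm

lemma prod_qPoch_mul_pow {ζ p : ℂ} (hn : 0 < n) (hζ : IsPrimitiveRoot ζ n) (hp : ‖p‖ < 1) (a : ℂ) :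
    ∏ j ∈ range n, qPoch (a * ζ ^ j) p = qPoch (a ^ n) (p ^ n) := by
  unfold qPoch
  rw [← Multipliable.tprod_finsetProd fun j _ ↦ multipliable_one_sub_mul_pow _ hp]
  refine tprod_congr fun i ↦ ?_
  calc ∏ j ∈ range n, (1 - a * ζ ^ j * p ^ i)
    _ = ∏ j ∈ range n, (1 - a * p ^ i * ζ ^ j) := by simp only [mul_right_comm]
    _ = 1 - a ^ n * (p ^ n) ^ i := by rw [prod_one_sub_mul_pow hn hζ, mul_pow, pow_right_comm]

theorem prod_range_thetaProd (hn : 0 < n) (hτ : 0 < τ.im) :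
    ∏ j ∈ range n, thetaProd (j * π / n) τ = η (n * τ) ^ 2 := by
  have hζ := isPrimitiveRoot_exp n hn.ne'
  have hp := norm_nome_sq_lt_one hτ
  have hw (j : ℕ) : cexp (2 * I * (j * π / n)) = cexp (2 * π * I / n) ^ j := by
    rw [← exp_nat_mul]
    ring_nf
  have hexp : cexp (π * I * (n * τ) / 6) = cexp (π * I * τ / 6) ^ n := by
    rw [← exp_nat_mul]
    ring_nf
  rw [← thetaProd_zero]
  simp only [thetaProd, hw, ← inv_pow, prod_mul_distrib, prod_const, card_range,
    prod_qPoch_mul_pow hn hζ hp, prod_qPoch_mul_pow hn hζ.inv hp, hexp, nome_nat_mul,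
    pow_right_comm _ n 2, mul_zero, exp_zero, inv_one, mul_one]

lemma prod_Ico_two_mul_sin (hn : 0 < n) : ∏ j ∈ Ico 1 n, (2 * Real.sin (j * π / n)) = n := by
  obtain ⟨m, rfl⟩ := Nat.exists_eq_add_one.mpr hn
  have hfactor {j : ℕ} (hj : j ∈ Ico 1 (m + 1)) :
      2 * Real.sin (j * π / (m + 1 : ℕ)) = ‖1 - cexp (2 * π * I / (m + 1 : ℕ)) ^ j‖ := by
    have hangle : cexp (2 * π * I / (m + 1 : ℕ)) ^ j =
        cexp (I * (2 * (j * π / (m + 1 : ℕ)) : ℝ)) := by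
      rw [← exp_nat_mul]
      push_cast
      ring_nf
    have hle : (j : ℝ) ≤ (m + 1 : ℕ) := Nat.cast_le.mpr (mem_Ico.mp hj).2.le
    have hsin : 0 ≤ Real.sin (j * π / (m + 1 : ℕ)) := by
      refine Real.sin_nonneg_of_nonneg_of_le_pi (by positivity) ?_
      rw [div_le_iff₀ (by positivity), mul_comm π]
      gcongr
    rw [hangle, norm_sub_rev, norm_exp_I_mul_ofReal_sub_one, mul_div_cancel_left₀ _ two_ne_zero,
      Real.norm_of_nonneg (by positivity)]
  rw [prod_congr rfl fun j hj ↦ hfactor hj, ← norm_prod, prod_Ico_eq_prod_range]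
  simp only [add_comm 1, Nat.add_sub_cancel]
  rw [(isPrimitiveRoot_exp (m + 1) m.succ_ne_zero).prod_one_sub_pow_eq_order]
  exact_mod_cast norm_natCast (m + 1)

theorem prod_Ico_theta1 (hn : 0 < n) (hτ : 0 < τ.im) :
    ∏ j ∈ Ico 1 n, theta1 (j * π / n) τ = n * η τ ^ (n - 1) * η (n * τ) ^ 2 / η τ ^ 2 := by
  have hsin : ∏ j ∈ Ico 1 n, (2 * sin (j * π / n : ℂ)) = n := by
    exact_mod_cast congrArg ofReal (prod_Ico_two_mul_sin hn)
  have hthetaProd : η τ ^ 2 * ∏ j ∈ Ico 1 n, thetaProd (j * π / n) τ = η (n * τ) ^ 2 := by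
    rw [← prod_range_thetaProd hn hτ, prod_range_eq_mul_Ico _ hn, Nat.cast_zero, zero_mul,
      zero_div, thetaProd_zero]
  have hη := eta_ne_zero hτ
  rw [prod_congr rfl fun j _ ↦ theta1_eq_sin_mul_eta_mul_thetaProd _ hτ, prod_mul_distrib,
    prod_mul_distrib, hsin, prod_const, Nat.card_Ico, ← hthetaProd, mul_left_comm,
    mul_div_cancel_left₀ _ (pow_ne_zero 2 hη)]

lemma theta1_sq_mul_prod_Icc (hn : 3 ≤ n) (τ : ℂ) :
    theta1 (π / n) τ ^ 2 * ∏ j ∈ Icc 2 (n - 2), theta1 (j * π / n) τ =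
      ∏ j ∈ Ico 1 n, theta1 (j * π / n) τ := by
  obtain ⟨k, rfl⟩ := Nat.exists_eq_add_of_le' hn
  have hlast : theta1 ((k + 2 : ℕ) * π / (k + 3 : ℕ)) τ = theta1 (π / (k + 3 : ℕ)) τ := by
    have hk : ((k + 3 : ℕ) : ℂ) ≠ 0 := Nat.cast_ne_zero.mpr (by lia)
    rw [← theta1_pi_sub]
    congr 1
    field_simp
    push_cast
    ring
  rw [prod_Ico_succ_top (by lia), prod_eq_prod_Ico_succ_bot (by lia), hlast, Nat.cast_one, one_mul,
    show Icc 2 (k + 3 - 2) = Ico 2 (k + 2) by ext; simp only [mem_Icc, mem_Ico]; lia]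
  ring

end EtaQuotients

section Weber

/-- Weber's modular function `𝔣₁`, in which the `q`-Pochhammer side of the identity is written. -/
noncomputable def weberF₁ (τ : ℂ) : ℂ := η (τ / 2) / η τ

/-- Weber's modular function `𝔣₂`, in which the theta side of the identity is written. -/
noncomputable def weberF₂ (τ : ℂ) : ℂ := (√2 : ℝ) * η (2 * τ) / η τ

lemma weberF₂_sq (τ : ℂ) : weberF₂ τ ^ 2 = 2 * η (2 * τ) ^ 2 / η τ ^ 2 := by
  have hsqrt : ((√2 : ℝ) : ℂ) ^ 2 = 2 := by exact_mod_cast Real.sq_sqrt zero_le_two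
  rw [weberF₂, div_pow, mul_pow, hsqrt]

variable {τ : ℂ}

lemma neg_one_div_im_pos (hτ : 0 < τ.im) : 0 < (-1 / τ).im := by
  simpa [neg_div] using UpperHalfPlane.im_inv_neg_coe_pos ⟨τ, hτ⟩

lemma eta_neg_one_div_sq (hτ : 0 < τ.im) : η (-1 / τ) ^ 2 = τ / I * η τ ^ 2 := by
  have hsq {w : ℂ} : Complex.sqrt w ^ 2 = w := by
    exact_mod_cast cpow_nat_inv_pow w two_ne_zero
  have h : η (-1 / τ) = (Complex.sqrt I)⁻¹ * (Complex.sqrt τ * η τ) := eta_comp_eq_csqrt_I_inv hτ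
  rw [h, mul_pow, mul_pow, inv_pow, hsq, hsq]
  ring

theorem weberF₂_neg_one_div_sq (hτ : 0 < τ.im) : weberF₂ (-1 / τ) ^ 2 = weberF₁ τ ^ 2 := by
  have hτ0 : τ ≠ 0 := by
    rintro rfl
    simp at hτ
  have hhalf := eta_neg_one_div_sq (τ := τ / 2) (by simpa using hτ)
  rw [show -1 / (τ / 2) = 2 * (-1 / τ) by field_simp] at hhalf
  rw [weberF₂_sq, weberF₁, div_pow, hhalf, eta_neg_one_div_sq hτ]
  field_simp

lemma qPoch_mul_qPoch_sq {p : ℂ} (hp : ‖p‖ < 1) :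
    qPoch p (p ^ 2) * qPoch (p ^ 2) (p ^ 2) = qPoch p p := by
  have hp2 : ‖p ^ 2‖ < 1 := by simpa using pow_lt_one₀ (norm_nonneg _) hp two_ne_zero
  have heven : (fun k ↦ 1 - p * p ^ (2 * k)) = fun k ↦ 1 - p * (p ^ 2) ^ k := by
    simp only [pow_mul]
  have hodd : (fun k ↦ 1 - p * p ^ (2 * k + 1)) = fun k ↦ 1 - p ^ 2 * (p ^ 2) ^ k := by
    ext k
    ring
  have h := tprod_even_mul_odd (f := fun i ↦ 1 - p * p ^ i)
    (heven ▸ multipliable_one_sub_mul_pow _ hp2) (hodd ▸ multipliable_one_sub_mul_pow _ hp2)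
  rwa [heven, hodd] at h

lemma weberF₁_eq_exp_mul_qPoch (hτ : 0 < τ.im) :
    weberF₁ τ = cexp (-(π * I * τ / 24)) * qPoch (nome τ) (nome τ ^ 2) := by
  have hnome : nome (τ / 2) ^ 2 = nome τ := by
    rw [← nome_nat_mul]
    congr 1
    push_cast
    ring
  have hexp : cexp (π * I * (τ / 2) / 12) =
      cexp (-(π * I * τ / 24)) * cexp (π * I * τ / 12) := by
    rw [← exp_add]
    ring_nf
  rw [weberF₁, div_eq_iff (eta_ne_zero hτ), eta_eq_exp_mul_qPoch (τ / 2), eta_eq_exp_mul_qPoch τ,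
    hnome, ← qPoch_mul_qPoch_sq (norm_nome_lt_one hτ), hexp]
  ring

variable {n : ℕ}

lemma natCast_mul_im_pos (hn : 0 < n) (hτ : 0 < τ.im) : 0 < (n * τ).im := by
  simpa using mul_pos (Nat.cast_pos.mpr hn) hτ

theorem exp_mul_qPoch_sq_div_eq_weberF₁ (hn : 0 < n) (hτ : 0 < τ.im) :
    cexp (π * I * τ * (n - 1) * (n + 1) / 12) * qPoch (nome τ) (nome τ ^ 2) ^ 2 /
        qPoch (nome τ ^ n) (nome τ ^ (2 * n)) ^ (2 * n) =
      weberF₁ τ ^ 2 / weberF₁ (n * τ) ^ (2 * n) := by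
  have hexp : cexp (-(π * I * τ / 24)) ^ 2 = cexp (π * I * τ * (n - 1) * (n + 1) / 12) *
      cexp (-(π * I * (n * τ) / 24)) ^ (2 * n) := by
    rw [← exp_nat_mul, ← exp_nat_mul, ← exp_add]
    push_cast
    ring_nf
  rw [weberF₁_eq_exp_mul_qPoch hτ, weberF₁_eq_exp_mul_qPoch (natCast_mul_im_pos hn hτ),
    nome_nat_mul, ← pow_mul, mul_comm n 2, mul_pow, mul_pow, hexp,
    mul_right_comm _ (cexp (-(π * I * (n * τ) / 24)) ^ (2 * n)),
    mul_comm (cexp (-(π * I * (n * τ) / 24)) ^ (2 * n)),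
    mul_div_mul_right _ _ (pow_ne_zero _ (exp_ne_zero _))]

theorem theta1_quotient_eq_weberF₂ (hn : 0 < n) (hτ : 0 < τ.im) :
    1 / n * (theta1' 0 τ / theta1' 0 (n * τ)) * (theta1 (π / 2) (n * τ) / theta1 (π / 2) τ) *
        (∏ j ∈ Ico 1 n, theta1 (j * π / n) τ) / theta1 (π / 2) τ ^ (n - 1) =
      weberF₂ (n * τ) ^ 2 / weberF₂ τ ^ (2 * n) := by
  have hnτ := natCast_mul_im_pos hn hτ
  have hηn := eta_ne_zero hnτ
  have hη2 : η (2 * τ) ≠ 0 := eta_ne_zero (by exact_mod_cast natCast_mul_im_pos two_pos hτ)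
  rw [prod_Ico_theta1 hn hτ, theta1'_zero hτ, theta1'_zero hnτ, theta1_pi_div_two hτ,
    theta1_pi_div_two hnτ, pow_mul (weberF₂ τ), weberF₂_sq, weberF₂_sq]
  obtain ⟨m, rfl⟩ := Nat.exists_eq_add_one.mpr hn
  have hm : ((m + 1 : ℕ) : ℂ) ≠ 0 := Nat.cast_ne_zero.mpr m.succ_ne_zero
  rw [Nat.add_sub_cancel, div_pow, div_pow, mul_pow, mul_pow]
  field_simp
  ring

end Weber

theorem theta1_combined_identity (n : ℕ) (hn : 3 ≤ n) (τ : ℂ) (hτ : 0 < τ.im)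
    (q : ℂ) (hq : q = Complex.exp (Real.pi * Complex.I * τ))
    (τ' : ℂ) (hτ' : τ' = -1 / τ) :
    Complex.exp (Real.pi * Complex.I * τ * ((n : ℂ) - 1) * ((n : ℂ) + 1) / 12) *
        (qPoch q (q ^ 2)) ^ 2 / (qPoch (q ^ n) (q ^ (2 * n))) ^ (2 * n) =
      (1 / (n : ℂ)) * (theta1' 0 (τ' / n) / theta1' 0 τ') *
        (theta1 ((Real.pi : ℂ) / 2) τ' / theta1 ((Real.pi : ℂ) / 2) (τ' / n)) *
        ((theta1 ((Real.pi : ℂ) / n) (τ' / n)) ^ 2 *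
            ∏ j ∈ Finset.Icc 2 (n - 2), theta1 ((j : ℂ) * Real.pi / n) (τ' / n)) /
        (theta1 ((Real.pi : ℂ) / 2) (τ' / n)) ^ (n - 1) := by
  have hn0 : 0 < n := by lia
  have hnτ := natCast_mul_im_pos hn0 hτ
  have hσ : τ' / n = -1 / (n * τ) := by rw [hτ', div_div, mul_comm τ]
  have hτ'σ : τ' = n * (τ' / n) := (mul_div_cancel₀ _ (Nat.cast_ne_zero.mpr hn0.ne')).symm
  have hσim : 0 < (τ' / n).im := hσ ▸ neg_one_div_im_pos hnτ
  rw [theta1_sq_mul_prod_Icc hn]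
  calc _
    _ = weberF₁ τ ^ 2 / weberF₁ (n * τ) ^ (2 * n) := by
      rw [hq]
      exact exp_mul_qPoch_sq_div_eq_weberF₁ hn0 hτ
    _ = weberF₂ τ' ^ 2 / weberF₂ (τ' / n) ^ (2 * n) := by
      rw [hσ, hτ', pow_mul, pow_mul, weberF₂_neg_one_div_sq hτ, weberF₂_neg_one_div_sq hnτ]
    _ = _ := by simpa only [← hτ'σ] using (theta1_quotient_eq_weberF₂ hn0 hσim).symm
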